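/- (Trapping region, steady case.) Let g > 0 and let ζ: ℝ² → ℝ be a smooth time-independent surface elevation. Let (x(t), y(t)) be a C² solution of the steady John–Sclavounos equations with initial position x₀ = (x(0), y(0)) and initial velocity u₀ = (ẋ(0), ẏ(0)). Define D₀ = { x ∈ ℝ² : ζ(x) ≤ ζ(x₀) + |u₀|²/(2g) + (u₀·∇ζ(x₀))²/(2g) }. Then (x(t), y(t)) ∈ D₀ for all t in the interval of existence of the solution. -/

import Mathlib

noncomputable section

/-- Partial derivative of `ζ(x,y)` with respect to `x`. -/
def dx (ζ : ℝ × ℝ → ℝ) (p : ℝ × ℝ) : ℝ := fderiv ℝ ζ p (1, 0)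

/-- Partial derivative of `ζ(x,y)` with respect to `y`. -/
def dy (ζ : ℝ × ℝ → ℝ) (p : ℝ × ℝ) : ℝ := fderiv ℝ ζ p (0, 1)

def dxx (ζ : ℝ × ℝ → ℝ) (p : ℝ × ℝ) : ℝ := fderiv ℝ (dx ζ) p (1, 0)
def dxy (ζ : ℝ × ℝ → ℝ) (p : ℝ × ℝ) : ℝ := fderiv ℝ (dx ζ) p (0, 1)
def dyy (ζ : ℝ × ℝ → ℝ) (p : ℝ × ℝ) : ℝ := fderiv ℝ (dy ζ) p (0, 1)

/-- The steady John–Sclavounos equations for a horizontal trajectory `(x(t), y(t))` on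
the time-independent surface `z = ζ(x,y)`, at time `t`, with gravity `g`:
`(1+ζ_x²)ẍ + ζ_xζ_y ÿ + Q ζ_x = 0` and `(1+ζ_y²)ÿ + ζ_xζ_y ẍ + Q ζ_y = 0`, where
`Q = ζ_xx ẋ² + 2ζ_xy ẋẏ + ζ_yy ẏ² + g`. -/
def SteadyJSEq (g : ℝ) (ζ : ℝ × ℝ → ℝ) (x y : ℝ → ℝ) (t : ℝ) : Prop :=
  (1 + dx ζ (x t, y t) ^ 2) * deriv (deriv x) t
      + dx ζ (x t, y t) * dy ζ (x t, y t) * deriv (deriv y) t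
      + (dxx ζ (x t, y t) * (deriv x t) ^ 2
          + 2 * dxy ζ (x t, y t) * deriv x t * deriv y t
          + dyy ζ (x t, y t) * (deriv y t) ^ 2 + g) * dx ζ (x t, y t) = 0
  ∧ (1 + dy ζ (x t, y t) ^ 2) * deriv (deriv y) t
      + dx ζ (x t, y t) * dy ζ (x t, y t) * deriv (deriv x) t
      + (dxx ζ (x t, y t) * (deriv x t) ^ 2
          + 2 * dxy ζ (x t, y t) * deriv x t * deriv y t
          + dyy ζ (x t, y t) * (deriv y t) ^ 2 + g) * dy ζ (x t, y t) = 0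

/-!
Put the particle on the surface at height `z(t) = ζ(γ(t))`. Since `z̈ = D²ζ(γ̇, γ̇) + Dζ γ̈`,
the equations say `γ̈ + (z̈ + g) ∇ζ = 0`. Pairing with `γ̇` gives `γ̈·γ̇ + (z̈ + g) ż = 0`, so
the energy `H = g z + ½|γ̇|² + ½ż²` is conserved, and `g z ≤ H` bounds the height by `H(0) / g`.
-/

section Calculus

variable {𝕜 E F : Type*} [NontriviallyNormedField 𝕜] [NormedAddCommGroup E] [NormedSpace 𝕜 E]
  [NormedAddCommGroup F] [NormedSpace 𝕜 F]

lemma deriv_prodMk {x : 𝕜 → E} {y : 𝕜 → F} {t : 𝕜}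
    (hx : DifferentiableAt 𝕜 x t) (hy : DifferentiableAt 𝕜 y t) :
    deriv (fun s ↦ (x s, y s)) t = (deriv x t, deriv y t) :=
  (hx.hasDerivAt.prodMk hy.hasDerivAt).deriv

lemma differentiableAt_deriv_of_contDiffAt {γ : 𝕜 → E} {t : 𝕜} (hγ : ContDiffAt 𝕜 2 γ t) :
    DifferentiableAt 𝕜 (deriv γ) t :=
  (hγ.derivWithin (m := 1) one_add_one_eq_two.le).differentiableAt one_ne_zero

lemma deriv_deriv_prodMk {x : 𝕜 → E} {y : 𝕜 → F} {t : 𝕜}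
    (hx : ContDiffAt 𝕜 2 x t) (hy : ContDiffAt 𝕜 2 y t) :
    deriv (deriv fun s ↦ (x s, y s)) t = (deriv (deriv x) t, deriv (deriv y) t) := by
  have hv : deriv (fun s ↦ (x s, y s)) =ᶠ[nhds t] fun s ↦ (deriv x s, deriv y s) := by
    filter_upwards [hx.eventually (by simp), hy.eventually (by simp)] with s hxs hys
    exact deriv_prodMk (hxs.differentiableAt two_ne_zero) (hys.differentiableAt two_ne_zero)
  rw [hv.deriv_eq]
  exact deriv_prodMk (differentiableAt_deriv_of_contDiffAt hx)
    (differentiableAt_deriv_of_contDiffAt hy)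

lemma differentiableAt_fderiv_of_contDiffAt {f : E → F} {p : E} (hf : ContDiffAt 𝕜 2 f p) :
    DifferentiableAt 𝕜 (fderiv 𝕜 f) p :=
  (hf.fderiv_right (m := 1) one_add_one_eq_two.le).differentiableAt one_ne_zero

lemma fderiv_fderiv_apply_const {f : E → F} {p : E} (hf : DifferentiableAt 𝕜 (fderiv 𝕜 f) p)
    (v w : E) : fderiv 𝕜 (fun q ↦ fderiv 𝕜 f q v) p w = fderiv 𝕜 (fderiv 𝕜 f) p w v := by
  simp [fderiv_clm_apply hf (differentiableAt_const v)]

lemma hasDerivAt_fderiv_apply_deriv {f : E → F} {γ : 𝕜 → E} {t : 𝕜}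
    (hf : DifferentiableAt 𝕜 (fderiv 𝕜 f) (γ t)) (hγ : DifferentiableAt 𝕜 γ t)
    (hγ' : DifferentiableAt 𝕜 (deriv γ) t) :
    HasDerivAt (fun s ↦ fderiv 𝕜 f (γ s) (deriv γ s))
      (fderiv 𝕜 (fderiv 𝕜 f) (γ t) (deriv γ t) (deriv γ t)
        + fderiv 𝕜 f (γ t) (deriv (deriv γ) t)) t :=
  (hf.hasFDerivAt.comp_hasDerivAt t hγ.hasDerivAt).clm_apply hγ'.hasDerivAt

end Calculus

lemma eq_of_hasDerivAt_zero_of_ordConnected {F : Type*} [NormedAddCommGroup F] [NormedSpace ℝ F]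
    {f : ℝ → F} {J : Set ℝ} {s t : ℝ}
    (hJ : J.OrdConnected) (hf : ∀ r ∈ J, HasDerivAt f 0 r) (hs : s ∈ J) (ht : t ∈ J) :
    f t = f s := by
  have h : ‖f t - f s‖ ≤ 0 * ‖t - s‖ :=
    hJ.convex.norm_image_sub_le_of_norm_hasDerivWithin_le
      (fun r hr ↦ (hf r hr).hasDerivWithinAt) (fun _ _ ↦ norm_zero.le) hs ht
  rwa [zero_mul, norm_le_zero_iff, sub_eq_zero] at h

section CoordinateFree

variable {E : Type*} [NormedAddCommGroup E] [NormedSpace ℝ E]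

/-- The steady John–Sclavounos equations at time `t` for a curve `γ` in a normed space, with the
kinetic form `B` in place of the Euclidean inner product:
`γ̈ + (D²ζ(γ̇, γ̇) + Dζ γ̈ + g) ∇ζ = 0`. They are tested against every vector `w`, so that no
gradient with respect to `B` is needed. -/
def IntrinsicSteadyJSEq (B : E →L[ℝ] E →L[ℝ] ℝ) (g : ℝ) (ζ : E → ℝ) (γ : ℝ → E) (t : ℝ) : Prop :=
  ∀ w, B (deriv (deriv γ) t) w
      + (fderiv ℝ (fderiv ℝ ζ) (γ t) (deriv γ t) (deriv γ t)
          + fderiv ℝ ζ (γ t) (deriv (deriv γ) t) + g) * fderiv ℝ ζ (γ t) w = 0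

/-- The Hamiltonian `H = g ζ + ½|γ̇|² + ½(γ̇·∇ζ)²` along a curve `γ`, where `|γ̇|² = B(γ̇, γ̇)`. -/
def steadyJSHamiltonian (B : E →L[ℝ] E →L[ℝ] ℝ) (g : ℝ) (ζ : E → ℝ) (γ : ℝ → E) (t : ℝ) : ℝ :=
  g * ζ (γ t) + B (deriv γ t) (deriv γ t) / 2 + fderiv ℝ ζ (γ t) (deriv γ t) ^ 2 / 2

variable {B : E →L[ℝ] E →L[ℝ] ℝ} {g : ℝ} {ζ : E → ℝ} {γ : ℝ → E} {t : ℝ}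

lemma hasDerivAt_kineticForm (hB : B.toBilinForm.IsSymm) {u : ℝ → E} {u' : E}
    (hu : HasDerivAt u u' t) : HasDerivAt (fun s ↦ B (u s) (u s) / 2) (B u' (u t)) t := by
  have hsymm : B (u t) u' = B u' (u t) := hB.eq _ _
  refine ((B.hasDerivAt_of_bilinear (fun _ ↦ hu) fun _ ↦ hu).div_const 2).congr_deriv ?_
  rw [hsymm, add_self_div_two]

lemma IntrinsicSteadyJSEq.hasDerivAt_hamiltonian (h : IntrinsicSteadyJSEq B g ζ γ t)
    (hB : B.toBilinForm.IsSymm) (hζ : ContDiffAt ℝ 2 ζ (γ t)) (hγ : ContDiffAt ℝ 2 γ t) :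
    HasDerivAt (steadyJSHamiltonian B g ζ γ) 0 t := by
  have hγ₁ : DifferentiableAt ℝ γ t := hγ.differentiableAt two_ne_zero
  have hγ₂ : DifferentiableAt ℝ (deriv γ) t := differentiableAt_deriv_of_contDiffAt hγ
  have hheight : HasDerivAt (fun s ↦ ζ (γ s)) (fderiv ℝ ζ (γ t) (deriv γ t)) t :=
    (hζ.differentiableAt two_ne_zero).hasFDerivAt.comp_hasDerivAt t hγ₁.hasDerivAt
  have hclimb := hasDerivAt_fderiv_apply_deriv (differentiableAt_fderiv_of_contDiffAt hζ) hγ₁ hγ₂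
  refine (((hheight.const_mul g).add (hasDerivAt_kineticForm hB hγ₂.hasDerivAt)).add
    ((hclimb.pow 2).div_const 2)).congr_deriv ?_
  linear_combination h (deriv γ t)

lemma steadyJSHamiltonian_eq (hB : B.toBilinForm.IsSymm) {J : Set ℝ} (hJ : J.OrdConnected)
    (hζ : ∀ r ∈ J, ContDiffAt ℝ 2 ζ (γ r)) (hγ : ∀ r ∈ J, ContDiffAt ℝ 2 γ r)
    (h : ∀ r ∈ J, IntrinsicSteadyJSEq B g ζ γ r) {s : ℝ} (hs : s ∈ J) (ht : t ∈ J) :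
    steadyJSHamiltonian B g ζ γ t = steadyJSHamiltonian B g ζ γ s :=
  eq_of_hasDerivAt_zero_of_ordConnected hJ
    (fun r hr ↦ (h r hr).hasDerivAt_hamiltonian hB (hζ r hr) (hγ r hr)) hs ht

lemma mul_le_steadyJSHamiltonian (hB : B.toBilinForm.IsNonneg) :
    g * ζ (γ t) ≤ steadyJSHamiltonian B g ζ γ t := by
  have hkin : 0 ≤ B (deriv γ t) (deriv γ t) := hB.nonneg _
  unfold steadyJSHamiltonian
  linarith [sq_nonneg (fderiv ℝ ζ (γ t) (deriv γ t))]

theorem steadyJS_trapping_region_general (hB : B.toBilinForm.IsPosSemidef) (hg : 0 < g)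
    {J : Set ℝ} (hJ : J.OrdConnected)
    (hζ : ∀ r ∈ J, ContDiffAt ℝ 2 ζ (γ r)) (hγ : ∀ r ∈ J, ContDiffAt ℝ 2 γ r)
    (h : ∀ r ∈ J, IntrinsicSteadyJSEq B g ζ γ r) {s : ℝ} (hs : s ∈ J) (ht : t ∈ J) :
    ζ (γ t) ≤ ζ (γ s) + B (deriv γ s) (deriv γ s) / (2 * g)
      + fderiv ℝ ζ (γ s) (deriv γ s) ^ 2 / (2 * g) :=
  calc
    ζ (γ t) = g * ζ (γ t) / g := (mul_div_cancel_left₀ _ hg.ne').symm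
    _ ≤ steadyJSHamiltonian B g ζ γ t / g := by
      gcongr
      exact mul_le_steadyJSHamiltonian hB.isNonneg
    _ = steadyJSHamiltonian B g ζ γ s / g := by
      rw [steadyJSHamiltonian_eq hB.isSymm hJ hζ hγ h hs ht]
    _ = _ := by
      unfold steadyJSHamiltonian
      field_simp

end CoordinateFree

section Plane

/-- The Euclidean inner product of the plane. The norm of `ℝ × ℝ` is the sup norm, so it is not
available as an `inner`. -/
def planeInner : ℝ × ℝ →L[ℝ] ℝ × ℝ →L[ℝ] ℝ :=
  (ContinuousLinearMap.fst ℝ ℝ ℝ).smulRight (ContinuousLinearMap.fst ℝ ℝ ℝ)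
    + (ContinuousLinearMap.snd ℝ ℝ ℝ).smulRight (ContinuousLinearMap.snd ℝ ℝ ℝ)

lemma planeInner_apply (v w : ℝ × ℝ) : planeInner v w = v.1 * w.1 + v.2 * w.2 := by
  simp [planeInner]

lemma isPosSemidef_planeInner : planeInner.toBilinForm.IsPosSemidef where
  eq v w := by simp [planeInner_apply, mul_comm]
  nonneg v := by
    rw [ContinuousLinearMap.toBilinForm_apply, planeInner_apply]
    exact add_nonneg (mul_self_nonneg _) (mul_self_nonneg _)

lemma linearMap_prod_apply_eq_smul_add_smul {R M : Type*} [Semiring R] [AddCommMonoid M]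
    [Module R M] (L : R × R →ₗ[R] M) (a b : R) : L (a, b) = a • L (1, 0) + b • L (0, 1) := by
  simp [← map_smul, ← map_add]

lemma fderiv_apply_eq_dx_add_dy (ζ : ℝ × ℝ → ℝ) (p : ℝ × ℝ) (a b : ℝ) :
    fderiv ℝ ζ p (a, b) = a * dx ζ p + b * dy ζ p :=
  linearMap_prod_apply_eq_smul_add_smul (fderiv ℝ ζ p).toLinearMap a b

lemma fderiv_dy_eq_dxy {ζ : ℝ × ℝ → ℝ} {p : ℝ × ℝ} (hζ : ContDiffAt ℝ 2 ζ p) :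
    fderiv ℝ (dy ζ) p (1, 0) = dxy ζ p := by
  have hd := differentiableAt_fderiv_of_contDiffAt hζ
  have hsymm : IsSymmSndFDerivAt ℝ ζ p := hζ.isSymmSndFDerivAt (by simp)
  calc fderiv ℝ (dy ζ) p (1, 0)
      = fderiv ℝ (fderiv ℝ ζ) p (1, 0) (0, 1) := fderiv_fderiv_apply_const hd _ _
    _ = fderiv ℝ (fderiv ℝ ζ) p (0, 1) (1, 0) := hsymm.eq _ _
    _ = dxy ζ p := (fderiv_fderiv_apply_const hd _ _).symm

lemma fderiv_fderiv_apply_self_eq {ζ : ℝ × ℝ → ℝ} {p : ℝ × ℝ} (hζ : ContDiffAt ℝ 2 ζ p)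
    (a b : ℝ) : fderiv ℝ (fderiv ℝ ζ) p (a, b) (a, b)
      = dxx ζ p * a ^ 2 + 2 * dxy ζ p * a * b + dyy ζ p * b ^ 2 := by
  have hd := differentiableAt_fderiv_of_contDiffAt hζ
  have hdx : fderiv ℝ (fderiv ℝ ζ) p (a, b) (1, 0) = a * dxx ζ p + b * dxy ζ p :=
    (fderiv_fderiv_apply_const hd (1, 0) (a, b)).symm.trans
      (fderiv_apply_eq_dx_add_dy (dx ζ) p a b)
  have hdy : fderiv ℝ (fderiv ℝ ζ) p (a, b) (0, 1) = a * dxy ζ p + b * dyy ζ p := by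
    rw [← fderiv_dy_eq_dxy hζ]
    exact (fderiv_fderiv_apply_const hd (0, 1) (a, b)).symm.trans
      (fderiv_apply_eq_dx_add_dy (dy ζ) p a b)
  calc fderiv ℝ (fderiv ℝ ζ) p (a, b) (a, b)
      = a * fderiv ℝ (fderiv ℝ ζ) p (a, b) (1, 0)
          + b * fderiv ℝ (fderiv ℝ ζ) p (a, b) (0, 1) :=
        linearMap_prod_apply_eq_smul_add_smul (fderiv ℝ (fderiv ℝ ζ) p (a, b)).toLinearMap a b
    _ = dxx ζ p * a ^ 2 + 2 * dxy ζ p * a * b + dyy ζ p * b ^ 2 := by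
        rw [hdx, hdy]
        ring

lemma SteadyJSEq.intrinsicSteadyJSEq {g : ℝ} {ζ : ℝ × ℝ → ℝ} {x y : ℝ → ℝ} {t : ℝ}
    (h : SteadyJSEq g ζ x y t) (hζ : ContDiffAt ℝ 2 ζ (x t, y t))
    (hx : ContDiffAt ℝ 2 x t) (hy : ContDiffAt ℝ 2 y t) :
    IntrinsicSteadyJSEq planeInner g ζ (fun s ↦ (x s, y s)) t := by
  rintro ⟨a, b⟩
  obtain ⟨hX, hY⟩ := h
  rw [deriv_deriv_prodMk hx hy,
    deriv_prodMk (hx.differentiableAt two_ne_zero) (hy.differentiableAt two_ne_zero),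
    fderiv_fderiv_apply_self_eq hζ, fderiv_apply_eq_dx_add_dy, fderiv_apply_eq_dx_add_dy,
    planeInner_apply]
  linear_combination a * hX + b * hY

end Plane

/-- (Trapping region, steady case.) A particle obeying the steady
John–Sclavounos equations with initial position `x₀ = (x(0), y(0))` and initial
velocity `u₀ = (ẋ(0), ẏ(0))` remains for all time in the set
`D₀ = { x : ζ(x) ≤ ζ(x₀) + |u₀|²/(2g) + (u₀·∇ζ(x₀))²/(2g) }`. -/
theorem steadyJS_trapping_region
    (g : ℝ) (hg : 0 < g) (ζ : ℝ × ℝ → ℝ) (hζ : ContDiff ℝ 2 ζ)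
    (x y : ℝ → ℝ) (hx : ContDiff ℝ 2 x) (hy : ContDiff ℝ 2 y)
    (J : Set ℝ) (hJ : J.OrdConnected) (h0 : (0 : ℝ) ∈ J)
    (hJS : ∀ t ∈ J, SteadyJSEq g ζ x y t)
    (D₀ : Set (ℝ × ℝ))
    (hD₀ : D₀ = {q : ℝ × ℝ | ζ q ≤ ζ (x 0, y 0)
      + ((deriv x 0) ^ 2 + (deriv y 0) ^ 2) / (2 * g)
      + (deriv x 0 * dx ζ (x 0, y 0) + deriv y 0 * dy ζ (x 0, y 0)) ^ 2 / (2 * g)}) :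
    ∀ t ∈ J, (x t, y t) ∈ D₀ := by
  intro t ht
  have hgen := steadyJS_trapping_region_general (γ := fun s ↦ (x s, y s))
    isPosSemidef_planeInner hg hJ (fun _ _ ↦ hζ.contDiffAt)
    (fun _ _ ↦ (hx.prodMk hy).contDiffAt)
    (fun r hr ↦ (hJS r hr).intrinsicSteadyJSEq hζ.contDiffAt hx.contDiffAt hy.contDiffAt) h0 ht
  rw [deriv_prodMk (hx.differentiable two_ne_zero 0) (hy.differentiable two_ne_zero 0),
    planeInner_apply, fderiv_apply_eq_dx_add_dy, ← sq, ← sq] at hgen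
  rwa [hD₀]

end
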